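/- arXiv:hep-th/0010227 — 5 statements merged into one kernel-verified Lean document; each statement's English description precedes it below -/
import Mathlib

section
/- Let V : ℝ → ℂ be 2π-periodic with V(-φ) = V(φ) for all φ, let E ∈ ℂ, and let ψ : ℝ → ℂ be twice differentiable, 2π-periodic, and satisfy (H_{1/2} ψ)(φ) = E·ψ(φ) for all φ, where (H_{1/2} ψ)(φ) = -(1/2)·(ψ''(φ) - i·ψ'(φ) - (1/4)·ψ(φ)) + V(φ)·ψ(φ). Then χ(φ) = e^{iφ}·ψ(-φ) is twice differentiable, 2π-periodic, and satisfies (H_{1/2} χ)(φ) = E·χ(φ) for all φ. (At flux Φ = π the magnetic Bragg reflection is a symmetry of the planar rotor with reflection-invariant potential.) -/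
open Complex

/-- The planar-rotor Hamiltonian at flux parameter `ε = 1/2` with potential `V`:
`(H_{1/2} ψ)(φ) = -(1/2)·(ψ''(φ) - i·ψ'(φ) - (1/4)·ψ(φ)) + V(φ)·ψ(φ)`. -/
noncomputable def rotorHamHalf (V : ℝ → ℂ) (ψ : ℝ → ℂ) (φ : ℝ) : ℂ :=
  -(1/2 : ℂ) * (deriv (deriv ψ) φ - I * deriv ψ φ - (1/4 : ℂ) * ψ φ) + V φ * ψ φ

/-- The derivative of the magnetic reflection `φ ↦ e^{iφ}·g(-φ)`. -/
theorem hasDerivAt_exp_mul_comp_neg {g : ℝ → ℂ} {g' : ℂ} {x : ℝ} (hg : HasDerivAt g g' (-x)) :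
    HasDerivAt (fun φ : ℝ => Complex.exp (I * (φ : ℂ)) * g (-φ))
      (Complex.exp (I * (x : ℂ)) * (I * g (-x) - g')) x := by
  have hexp : HasDerivAt (fun φ : ℝ => Complex.exp (I * (φ : ℂ)))
      (Complex.exp (I * (x : ℂ)) * (I * 1)) x :=
    ((Complex.ofRealCLM.hasDerivAt (x := x)).const_mul I).cexp
  have hneg : HasDerivAt (fun φ : ℝ => g (-φ)) (-g') x := by
    simpa [Function.comp_def] using hg.scomp x (hasDerivAt_neg x)
  exact (hexp.mul hneg).congr_deriv (by ring)

/-- **At flux `Φ = π` the magnetic Bragg reflection is a symmetry of the planar rotor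
with reflection-invariant potential.** If `V` is `2π`-periodic and reflection invariant,
and `ψ` is a twice differentiable `2π`-periodic eigenfunction of `H_{1/2}` with eigenvalue
`E`, then `χ(φ) = e^{iφ}·ψ(-φ)` is a twice differentiable `2π`-periodic eigenfunction of
`H_{1/2}` with the same eigenvalue. -/
theorem bragg_reflection_symmetry_at_half_flux (V : ℝ → ℂ)
    (hVper : ∀ φ : ℝ, V (φ + 2 * Real.pi) = V φ)
    (hVrefl : ∀ φ : ℝ, V (-φ) = V φ)
    (E : ℂ) (ψ : ℝ → ℂ)
    (hf1 : ∀ x : ℝ, DifferentiableAt ℝ ψ x)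
    (hf2 : ∀ x : ℝ, DifferentiableAt ℝ (deriv ψ) x)
    (hper : ∀ φ : ℝ, ψ (φ + 2 * Real.pi) = ψ φ)
    (heq : ∀ φ : ℝ, rotorHamHalf V ψ φ = E * ψ φ) :
    (∀ x : ℝ, DifferentiableAt ℝ (fun φ : ℝ => Complex.exp (I * (φ : ℂ)) * ψ (-φ)) x) ∧
    (∀ x : ℝ,
      DifferentiableAt ℝ (deriv (fun φ : ℝ => Complex.exp (I * (φ : ℂ)) * ψ (-φ))) x) ∧
    (∀ φ : ℝ, Complex.exp (I * ((φ + 2 * Real.pi : ℝ) : ℂ)) * ψ (-(φ + 2 * Real.pi))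
        = Complex.exp (I * (φ : ℂ)) * ψ (-φ)) ∧
    (∀ φ : ℝ, rotorHamHalf V (fun φ' : ℝ => Complex.exp (I * (φ' : ℂ)) * ψ (-φ')) φ
        = E * (Complex.exp (I * (φ : ℂ)) * ψ (-φ))) := by
  have hχ (x : ℝ) := hasDerivAt_exp_mul_comp_neg (hf1 (-x)).hasDerivAt
  have hχ' (x : ℝ) := hasDerivAt_exp_mul_comp_neg
    (((hf1 (-x)).hasDerivAt.const_mul I).sub (hf2 (-x)).hasDerivAt)
  have hderiv : deriv (fun φ : ℝ => Complex.exp (I * (φ : ℂ)) * ψ (-φ)) =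
      fun φ : ℝ => Complex.exp (I * (φ : ℂ)) * (I * ψ (-φ) - deriv ψ (-φ)) :=
    funext fun x => (hχ x).deriv
  refine ⟨fun x => (hχ x).differentiableAt, fun x => ?_, fun φ => ?_, fun φ => ?_⟩
  · rw [hderiv]
    exact (hχ' x).differentiableAt
  · have hexp : Complex.exp (I * ((φ + 2 * Real.pi : ℝ) : ℂ)) = Complex.exp (I * (φ : ℂ)) := by
      rw [← Complex.exp_periodic (I * (φ : ℂ))]
      push_cast
      ring_nf
    have hψ : ψ (-(φ + 2 * Real.pi)) = ψ (-φ) := by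
      rw [← hper (-(φ + 2 * Real.pi))]
      ring_nf
    rw [hexp, hψ]
  · have hderiv₂ : deriv (fun φ : ℝ => Complex.exp (I * (φ : ℂ)) *
        (I * ψ (-φ) - deriv ψ (-φ))) φ = _ := (hχ' φ).deriv
    have h := heq (-φ)
    simp only [rotorHamHalf, hVrefl] at h
    simp only [rotorHamHalf, hderiv, hderiv₂, Pi.sub_apply]
    linear_combination Complex.exp (I * (φ : ℂ)) * h
end

section
/- Let ψ : ℝ × ℝ → ℂ satisfy the k = 1 magnetic boundary conditions on the torus: ψ(x + 2π, y) = e^{iy/2}·ψ(x, y) and ψ(x, y + 2π) = e^{-ix/2}·ψ(x, y) for all x, y ∈ ℝ. If ψ is even under the reflection P_{++}, i.e. ψ(-x, -y) = ψ(x, y) for all x, y, then ψ(π, π) = 0. (A P_{++}-even state on the magnetic torus with unit Chern class necessarily has a node at the crossing point φ_{--} of the two non-contractible circles with holonomy -1.) -/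
open Complex

/-- **A `P₊₊`-even state on the magnetic torus with unit Chern class has a node at
`φ₋₋ = (π, π)`**, the crossing point of the two non-contractible circles with
holonomy `-1`. -/
theorem even_state_node_at_pi_pi (ψ : ℝ × ℝ → ℂ)
    (hbc1 : ∀ x y : ℝ, ψ (x + 2 * Real.pi, y) = Complex.exp (I * (y : ℂ) / 2) * ψ (x, y))
    (hbc2 : ∀ x y : ℝ, ψ (x, y + 2 * Real.pi) = Complex.exp (-I * (x : ℂ) / 2) * ψ (x, y))
    (heven : ∀ x y : ℝ, ψ (-x, -y) = ψ (x, y)) :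
    ψ (Real.pi, Real.pi) = 0 := by
  have hx := hbc1 (-Real.pi) Real.pi
  have hy := hbc2 (-Real.pi) (-Real.pi)
  have hI : Complex.exp (I * (Real.pi : ℂ) / 2) = I := by
    rw [mul_comm, mul_div_right_comm, Complex.exp_pi_div_two_mul_I]
  have hI' : Complex.exp (-I * ((-Real.pi : ℝ) : ℂ) / 2) = I := by
    rw [Complex.ofReal_neg, neg_mul_neg, hI]
  have hshift : -Real.pi + 2 * Real.pi = Real.pi := by ring
  rw [hshift, hI] at hx
  rw [hshift, hI', heven] at hy
  have hneg : ψ (Real.pi, Real.pi) = -ψ (Real.pi, Real.pi) := by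
    calc ψ (Real.pi, Real.pi) = I * (I * ψ (Real.pi, Real.pi)) := by rw [← hy, ← hx]
      _ = -ψ (Real.pi, Real.pi) := by rw [← mul_assoc, I_mul_I, neg_one_mul]
  exact self_eq_neg.mp hneg
end

section
/- Let ψ : ℝ × ℝ → ℂ satisfy the k = 1 magnetic boundary conditions on the torus: ψ(x + 2π, y) = e^{iy/2}·ψ(x, y) and ψ(x, y + 2π) = e^{-ix/2}·ψ(x, y) for all x, y ∈ ℝ. Then for all x, y ∈ ℝ, ψ(2π - x, 2π - y) = -e^{i(x-y)/2}·ψ(-x, -y). (The quantum reflection about the point φ_{--} = (π,π) coincides, on states satisfying the k = 1 magnetic boundary conditions, with minus the quantum reflection about the origin; hence the parity operators U(P_{++}) and U(P_{--}) differ by a sign even though they are the same transformation of the torus.) -/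
open Complex

/-- **The quantum reflection about `φ₋₋ = (π,π)` equals minus the quantum reflection about
the origin** on states satisfying the `k = 1` magnetic boundary conditions:
`ψ(2π - x, 2π - y) = -e^{i(x-y)/2}·ψ(-x, -y)`; hence the parity operators `U(P₊₊)` and
`U(P₋₋)` differ by a sign even though they implement the same transformation of the
torus. -/
theorem reflection_about_pi_pi_vs_origin (ψ : ℝ × ℝ → ℂ)
    (hbc1 : ∀ x y : ℝ, ψ (x + 2 * Real.pi, y) = Complex.exp (I * (y : ℂ) / 2) * ψ (x, y))
    (hbc2 : ∀ x y : ℝ, ψ (x, y + 2 * Real.pi) = Complex.exp (-I * (x : ℂ) / 2) * ψ (x, y)) :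
    ∀ x y : ℝ, ψ (2 * Real.pi - x, 2 * Real.pi - y)
      = -Complex.exp (I * ((x : ℂ) - (y : ℂ)) / 2) * ψ (-x, -y) := by
  intro x y
  have hexp : Complex.exp (I * ((-y + 2 * Real.pi : ℝ) : ℂ) / 2)
      * Complex.exp (-I * ((-x : ℝ) : ℂ) / 2)
      = -Complex.exp (I * ((x : ℂ) - (y : ℂ)) / 2) := by
    rw [← Complex.exp_add, ← Complex.exp_add_pi_mul_I]
    congr 1
    push_cast
    ring
  rw [sub_eq_neg_add, sub_eq_neg_add, hbc1, hbc2, ← mul_assoc, hexp]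
end

section
/- Define ψ : ℝ × ℝ → ℂ by ψ(x, y) = e^{ixy/(4π)} · Σ_{m ∈ ℤ} e^{imx} · e^{-(2πm + y)²/(4π)} (the series over m ∈ ℤ converges absolutely for every (x,y)). Then ψ satisfies the k = 1 magnetic boundary conditions on the torus: ψ(x + 2π, y) = e^{iy/2}·ψ(x, y) and ψ(x, y + 2π) = e^{-ix/2}·ψ(x, y) for all x, y ∈ ℝ. (The explicit lowest Landau level wavefunction for unit magnetic charge is a well-defined section of the line bundle with first Chern class 1.) -/
open Complex

/-- The `m`-th term of the lowest Landau level series: `e^{imx}·e^{-(2πm + y)²/(4π)}`. -/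
noncomputable def lllTerm (x y : ℝ) (m : ℤ) : ℂ :=
  Complex.exp (I * (m : ℂ) * (x : ℂ))
    * (Real.exp (-(2 * Real.pi * (m : ℝ) + y)^2 / (4 * Real.pi)) : ℂ)

/-- The lowest Landau level wavefunction on the torus for unit magnetic charge:
`ψ(x, y) = e^{ixy/(4π)} · Σ_{m ∈ ℤ} e^{imx}·e^{-(2πm + y)²/(4π)}`. -/
noncomputable def lll (x y : ℝ) : ℂ :=
  Complex.exp (I * (x : ℂ) * (y : ℂ) / (4 * (Real.pi : ℂ))) * ∑' m : ℤ, lllTerm x y m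

theorem lllTerm_eq_jacobiTheta₂_term (x y : ℝ) (m : ℤ) :
    lllTerm x y m = Complex.exp (-(y : ℂ) ^ 2 / (4 * (Real.pi : ℂ)))
      * jacobiTheta₂_term m (((x : ℂ) + I * (y : ℂ)) / (2 * (Real.pi : ℂ))) I := by
  have hpi : (Real.pi : ℂ) ≠ 0 := by exact_mod_cast Real.pi_ne_zero
  rw [lllTerm, jacobiTheta₂_term, ofReal_exp, ← Complex.exp_add, ← Complex.exp_add]
  congr 1
  push_cast
  field_simp
  linear_combination (-4 * (m : ℂ) * y * Real.pi - 4 * (m : ℂ) ^ 2 * Real.pi ^ 2) * I_sq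

theorem summable_lllTerm (x y : ℝ) : Summable (lllTerm x y) := by
  simp_rw [funext (lllTerm_eq_jacobiTheta₂_term x y)]
  exact ((summable_jacobiTheta₂_term_iff _ _).2 (by simp)).mul_left _

theorem lllTerm_add_two_pi_left (x y : ℝ) (m : ℤ) :
    lllTerm (x + 2 * Real.pi) y m = lllTerm x y m := by
  rw [lllTerm, lllTerm]
  congr 1
  rw [Complex.exp_eq_exp_iff_exists_int]
  exact ⟨m, by push_cast; ring⟩

theorem lllTerm_add_two_pi_right (x y : ℝ) (m : ℤ) :
    lllTerm x (y + 2 * Real.pi) m = Complex.exp (-I * (x : ℂ)) * lllTerm x y (m + 1) := by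
  rw [lllTerm, lllTerm, ← mul_assoc, ← Complex.exp_add]
  congr 2
  · push_cast
    ring
  · push_cast
    ring_nf

/-- **The explicit lowest Landau level wavefunction for unit magnetic charge is a
well-defined section of the line bundle with first Chern class `1`**: the series
converges absolutely for every `(x, y)`, and `ψ` satisfies the `k = 1` magnetic boundary
conditions `ψ(x + 2π, y) = e^{iy/2}·ψ(x, y)` and `ψ(x, y + 2π) = e^{-ix/2}·ψ(x, y)`. -/
theorem lll_magnetic_boundary_conditions :
    (∀ x y : ℝ, Summable fun m : ℤ => ‖lllTerm x y m‖) ∧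
    (∀ x y : ℝ, lll (x + 2 * Real.pi) y = Complex.exp (I * (y : ℂ) / 2) * lll x y) ∧
    (∀ x y : ℝ, lll x (y + 2 * Real.pi) = Complex.exp (-I * (x : ℂ) / 2) * lll x y) := by
  have hpi : (Real.pi : ℂ) ≠ 0 := by exact_mod_cast Real.pi_ne_zero
  refine ⟨fun x y => (summable_lllTerm x y).norm, fun x y => ?_, fun x y => ?_⟩
  · simp_rw [lll, lllTerm_add_two_pi_left]
    rw [← mul_assoc, ← Complex.exp_add]
    congr 2
    push_cast
    field_simp
    ring
  · have hshift : ∑' m : ℤ, lllTerm x y (m + 1) = ∑' m : ℤ, lllTerm x y m :=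
      (Equiv.addRight (1 : ℤ)).tsum_eq (lllTerm x y)
    simp_rw [lll, lllTerm_add_two_pi_right]
    rw [tsum_mul_left, hshift, ← mul_assoc, ← mul_assoc, ← Complex.exp_add, ← Complex.exp_add]
    congr 2
    push_cast
    field_simp
    ring
end

section
/- The family of real numbers indexed by m ∈ ℤ given by a_m = (-1)^m · e^{-π(m + 1/2)²} is summable, and Σ_{m ∈ ℤ} (-1)^m · e^{-π(m + 1/2)²} = 0. (This is the vanishing of the Jacobi-theta-type series controlling the value of the lowest Landau level wavefunction at the point (π, π) of the magnetic torus with unit charge.) -/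
/-- The reflection `m ↦ -1 - m` negates the terms of the alternating half-integer Gaussian
series. -/
lemma alternating_gaussian_reflect (m : ℤ) :
    (-1 : ℝ) ^ (-1 - m) * Real.exp (-Real.pi * (((-1 - m : ℤ) : ℝ) + 1/2)^2) =
      -((-1 : ℝ) ^ m * Real.exp (-Real.pi * ((m : ℝ) + 1/2)^2)) := by
  have hsign : (-1 : ℝ) ^ (-1 - m) = -(-1 : ℝ) ^ m := by
    rcases Int.even_or_odd m with hm | hm
    · rw [hm.neg_one_zpow, (Odd.sub_even (by decide) hm).neg_one_zpow]
    · rw [hm.neg_one_zpow, (Odd.sub_odd (by decide) hm).neg_one_zpow, neg_neg]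
  have hsq : (((-1 - m : ℤ) : ℝ) + 1/2)^2 = ((m : ℝ) + 1/2)^2 := by
    push_cast
    ring
  rw [hsign, hsq, neg_mul]

lemma summable_alternating_gaussian :
    Summable (fun m : ℤ => (-1 : ℝ) ^ m * Real.exp (-Real.pi * ((m : ℝ) + 1/2)^2)) := by
  refine (summable_pow_mul_jacobiTheta₂_term_bound (1/2) one_pos 0).of_norm_bounded fun m => ?_
  rw [norm_mul, norm_zpow, norm_neg, norm_one, one_zpow, one_mul, pow_zero, one_mul,
    Real.norm_eq_abs, Real.abs_exp, Real.exp_le_exp, neg_mul, neg_mul, neg_le_neg_iff]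
  refine mul_le_mul_of_nonneg_left ?_ Real.pi_pos.le
  push_cast
  nlinarith [neg_abs_le (m : ℝ)]

/-- **Vanishing of the Jacobi-theta-type series controlling the value of the lowest
Landau level wavefunction at the point `(π, π)` of the magnetic torus with unit charge:**
the family `a_m = (-1)^m · e^{-π(m + 1/2)²}` indexed by `m ∈ ℤ` is summable and
`Σ_{m ∈ ℤ} (-1)^m · e^{-π(m + 1/2)²} = 0`. -/
theorem theta_series_vanishes :
    Summable (fun m : ℤ => (-1 : ℝ) ^ m * Real.exp (-Real.pi * ((m : ℝ) + 1/2)^2)) ∧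
    ∑' m : ℤ, (-1 : ℝ) ^ m * Real.exp (-Real.pi * ((m : ℝ) + 1/2)^2) = 0 := by
  refine ⟨summable_alternating_gaussian, ?_⟩
  have h := (Equiv.subLeft (-1 : ℤ)).tsum_eq
    fun m : ℤ => (-1 : ℝ) ^ m * Real.exp (-Real.pi * ((m : ℝ) + 1/2)^2)
  simp only [Equiv.subLeft_apply, alternating_gaussian_reflect, tsum_neg] at h
  linarith
end
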